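/- Let p ≥ 1 and q ≥ 1 be integers. The extended Lorentz cone M(p,q) = {(x,u) ∈ ℝ^p × ℝ^q : ⟨x, e⟩ ≥ ‖u‖, x ≥ 0} is a proper cone in ℝ^{p+q}: it is closed, convex, satisfies λ v ∈ M(p,q) for all λ ≥ 0 and v ∈ M(p,q), satisfies M(p,q) ∩ (−M(p,q)) = {0}, and has nonempty interior. -/

import Mathlib

open Matrix Finset

/-- The extended Lorentz cone `L(p,q) = {(x,u) : x ≥ ‖u‖e componentwise}`. -/
noncomputable def Lcone (p q : ℕ) : Set (Fin (p + q) → ℝ) :=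
  {z | ∀ i : Fin p,
    Real.sqrt (∑ j : Fin q, (z (Fin.natAdd p j)) ^ 2) ≤ z (Fin.castAdd q i)}

/-- The extended Lorentz cone `M(p,q) = {(x,u) : ⟨x,e⟩ ≥ ‖u‖, x ≥ 0}`. -/
noncomputable def Mcone (p q : ℕ) : Set (Fin (p + q) → ℝ) :=
  {z | Real.sqrt (∑ j : Fin q, (z (Fin.natAdd p j)) ^ 2) ≤ ∑ i : Fin p, z (Fin.castAdd q i) ∧
    ∀ i : Fin p, 0 ≤ z (Fin.castAdd q i)}

lemma sqrt_sum_eq_norm_aux (p q : ℕ) (z : Fin (p + q) → ℝ) :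
    Real.sqrt (∑ j : Fin q, (z (Fin.natAdd p j)) ^ 2) =
      ‖WithLp.toLp 2 (fun j : Fin q => z (Fin.natAdd p j))‖ := by
  rw [EuclideanSpace.norm_eq]
  simp

lemma Mcone_smul_aux (p q : ℕ) (lam : ℝ) (hl : 0 ≤ lam) (v : Fin (p + q) → ℝ)
    (hv : v ∈ Mcone p q) : lam • v ∈ Mcone p q := by
  obtain ⟨h1, h2⟩ := hv
  refine ⟨?_, fun i => ?_⟩
  · rw [sqrt_sum_eq_norm_aux] at h1 ⊢
    have : WithLp.toLp 2 (fun j : Fin q => (lam • v) (Fin.natAdd p j)) =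
        lam • WithLp.toLp 2 (fun j : Fin q => v (Fin.natAdd p j)) := by
      ext j; simp
    rw [this, norm_smul, Real.norm_of_nonneg hl]
    simp only [Pi.smul_apply, smul_eq_mul, ← Finset.mul_sum]
    exact mul_le_mul_of_nonneg_left h1 hl
  · simpa using mul_nonneg hl (h2 i)

lemma Mcone_add_aux (p q : ℕ) (v w : Fin (p + q) → ℝ)
    (hv : v ∈ Mcone p q) (hw : w ∈ Mcone p q) : v + w ∈ Mcone p q := by
  obtain ⟨h1, h2⟩ := hv
  obtain ⟨h3, h4⟩ := hw
  refine ⟨?_, fun i => add_nonneg (h2 i) (h4 i)⟩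
  rw [sqrt_sum_eq_norm_aux] at h1 h3 ⊢
  have : WithLp.toLp 2 (fun j : Fin q => (v + w) (Fin.natAdd p j)) =
      WithLp.toLp 2 (fun j : Fin q => v (Fin.natAdd p j)) +
      WithLp.toLp 2 (fun j : Fin q => w (Fin.natAdd p j)) := by
    ext j; simp
  rw [this]
  simp only [Pi.add_apply, Finset.sum_add_distrib]
  exact (norm_add_le _ _).trans (add_le_add h1 h3)

theorem stmt10 (p q : ℕ) (hp : 1 ≤ p) (hq : 1 ≤ q) :
    IsClosed (Mcone p q) ∧ Convex ℝ (Mcone p q) ∧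
      (∀ lam : ℝ, 0 ≤ lam → ∀ v ∈ Mcone p q, lam • v ∈ Mcone p q) ∧
      Mcone p q ∩ (-Mcone p q) = {0} ∧
      (interior (Mcone p q)).Nonempty := by
  refine ⟨?_, ?_, fun lam hl v hv => Mcone_smul_aux p q lam hl v hv, ?_, ?_⟩
  · have h : Mcone p q = {z | Real.sqrt (∑ j : Fin q, (z (Fin.natAdd p j)) ^ 2) ≤
        ∑ i : Fin p, z (Fin.castAdd q i)} ∩ ⋂ i : Fin p, {z | 0 ≤ z (Fin.castAdd q i)} := by
      ext z; simp [Mcone]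
    rw [h]
    refine IsClosed.inter (isClosed_le (by fun_prop) (by fun_prop))
      (isClosed_iInter fun i => isClosed_le (by fun_prop) (by fun_prop))
  · intro x hx y hy a b ha hb _
    exact Mcone_add_aux p q _ _ (Mcone_smul_aux p q a ha x hx) (Mcone_smul_aux p q b hb y hy)
  · ext z
    simp only [Set.mem_inter_iff, Set.mem_neg, Set.mem_singleton_iff]
    constructor
    · rintro ⟨⟨h1, h2⟩, -, h4⟩
      have h0 : ∀ i : Fin p, z (Fin.castAdd q i) = 0 := fun i => by
        have a := h2 i
        have b := h4 i
        simp only [Pi.neg_apply] at b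
        linarith
      simp only [h0, Finset.sum_const_zero] at h1
      have h5 : ∑ j : Fin q, (z (Fin.natAdd p j)) ^ 2 ≤ 0 :=
        Real.sqrt_eq_zero'.mp (le_antisymm h1 (Real.sqrt_nonneg _))
      have h6 : ∑ j : Fin q, (z (Fin.natAdd p j)) ^ 2 = 0 :=
        le_antisymm h5 (Finset.sum_nonneg fun j _ => sq_nonneg _)
      rw [Finset.sum_eq_zero_iff_of_nonneg (fun j _ => sq_nonneg _)] at h6
      funext k
      refine Fin.addCases (fun i => ?_) (fun j => ?_) k
      · exact h0 i
      · exact pow_eq_zero_iff two_ne_zero |>.mp (h6 j (Finset.mem_univ j))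
    · rintro rfl
      simp [Mcone]
  · let U : Set (Fin (p + q) → ℝ) := {z | Real.sqrt (∑ j : Fin q, (z (Fin.natAdd p j)) ^ 2) <
        ∑ i : Fin p, z (Fin.castAdd q i)} ∩ ⋂ i : Fin p, {z | 0 < z (Fin.castAdd q i)}
    have hU : IsOpen U := IsOpen.inter (isOpen_lt (by fun_prop) (by fun_prop))
      (isOpen_iInter_of_finite fun i => isOpen_lt (by fun_prop) (by fun_prop))
    have hsub : U ⊆ Mcone p q := by
      rintro z ⟨h1, h2⟩
      rw [Set.mem_iInter] at h2
      exact ⟨le_of_lt h1, fun i => le_of_lt (h2 i)⟩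
    refine ⟨Fin.addCases (fun _ => 1) (fun _ => 0), interior_maximal hsub hU ⟨?_, ?_⟩⟩
    · simp only [Set.mem_setOf_eq, Fin.addCases_left, Fin.addCases_right]
      simp
      omega
    · simp
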